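/- For every κ ∈ (0,1) there exists a constant d_κ > 0 with the following property. Let c be a complete curve of constant geodesic curvature κ in ℍ², and γ a complete geodesic contained in the non-mean-convex side of c. Let γ' be the unique geodesic orthogonal to both γ and c, and in the half-plane bounded by γ not containing c, let γ₁ and γ₂ be the two geodesic rays from a common point p ∈ γ', orthogonal at p, ending at the two ideal endpoints of γ. Then d(c, γ₁ ∪ γ₂) ≥ d(c, γ) + d_κ. -/

import Mathlib

open Metric

/-- The inverse hyperbolic tangent. -/
noncomputable def artanh (x : ℝ) : ℝ := Real.log ((1 + x) / (1 - x)) / 2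

/-- A complete geodesic of the hyperbolic plane, as a subset: the range of an
isometric embedding of `ℝ`. -/
def IsGeodesicLine (G : Set UpperHalfPlane) : Prop :=
  ∃ g : ℝ → UpperHalfPlane, Isometry g ∧ Set.range g = G

/-- A geodesic ray issued from `p`: an arclength parametrization `f` of a half-line
with `f 0 = p`. -/
def IsRayFrom (f : ℝ → UpperHalfPlane) (p : UpperHalfPlane) : Prop :=
  f 0 = p ∧ ∀ s t : ℝ, 0 ≤ s → 0 ≤ t → dist (f s) (f t) = |s - t|

/-
In the hyperboloid model let `w` be the foot of the common perpendicular `γ'` on `γ`, `v` the unit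
tangent of `γ` at `w`, and `n` the unit tangent of `γ'` at `w` pointing away from `c`. The null
vectors `w ± v` represent the ideal endpoints of `γ`. Orthogonality of the two rays forces
`cosh d(w, p) = √2`, and since the direction of each ray at `p` is a unit normal of the other, a
point `z` satisfies `sinh d(z, γᵢ) ≥ ⟨z, n⟩ + ⟨z, ξᵢ⟩ / √2` with `ξᵢ = w ± v`. For `z` on `c` the
first term is at least `sinh d(c, γ)`, so it remains to bound the null coordinates `⟨z, w ± v⟩` from
below by a multiple of `cosh d(c, γ)` depending only on `κ`. This bound holds because some unit
normal `m` of the geodesic equidistant from `c` satisfies `⟨·, m⟩ ≤ S` on `c` and `⟨·, m⟩ > S` on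
`γ`, where `S = sinh (artanh κ)`: the first inequality at `z` and at the foot of `γ'` on `c`,
written in the frame `w + v`, `w - v`, `n`, keeps `z` away from the ideal endpoints.
-/

section Inequalities

open Real (sinh cosh exp)

-- The left-hand side is `(eˢ (a + b) + e⁻ˢ (a - b)) / 2`; the extremal `s` balances the two terms.
lemma sq_le_add_mul_sub_of_forall_le {a b S : ℝ} (hS : 0 < S)
    (h : ∀ s, S ≤ cosh s * a + sinh s * b) : S ^ 2 ≤ (a + b) * (a - b) := by
  have ha : S ≤ a := by simpa using h 0
  have hquad (x : ℝ) (hx : 0 < x) : 2 * S * x ≤ x ^ 2 * (a + b) + (a - b) := by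
    have hlog := h (Real.log x)
    rw [Real.cosh_log hx, Real.sinh_log hx] at hlog
    calc 2 * S * x ≤ 2 * ((x + x⁻¹) / 2 * a + (x - x⁻¹) / 2 * b) * x := by gcongr
      _ = x ^ 2 * (a + b) + (a - b) := by field_simp; ring
  rcases le_or_gt (a + b) 0 with hab | hab
  · have hsub : 0 < a - b := by linarith
    have hx := hquad ((a - b) / S) (by positivity)
    rw [mul_assoc, mul_div_cancel₀ _ hS.ne'] at hx
    linarith [mul_nonpos_of_nonneg_of_nonpos (sq_nonneg ((a - b) / S)) hab]
  · have hx := hquad (S / (a + b)) (by positivity)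
    field_simp at hx
    linarith

lemma add_eq_zero_of_abs_cosh_mul_add_sinh_mul_le {a b K : ℝ}
    (h : ∀ s, 0 ≤ s → |cosh s * a + sinh s * b| ≤ K) : a + b = 0 := by
  by_contra hne
  have hgrowth := Real.tendsto_exp_atTop.atTop_mul_const (abs_pos.mpr hne)
  obtain ⟨s, hs, hs0⟩ := ((hgrowth.eventually_gt_atTop (2 * K + |a - b|)).and
    (Filter.eventually_ge_atTop 0)).exists
  have hle : exp s * |a + b| ≤ 2 * K + |a - b| := calc
    exp s * |a + b| = |2 * (cosh s * a + sinh s * b) - exp (-s) * (a - b)| := by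
      rw [← Real.abs_exp s, ← abs_mul, Real.cosh_eq, Real.sinh_eq]
      ring_nf
    _ ≤ 2 * |cosh s * a + sinh s * b| + exp (-s) * |a - b| := by
      refine (abs_sub _ _).trans_eq ?_
      rw [abs_mul, abs_mul, abs_two, Real.abs_exp]
    _ ≤ 2 * K + 1 * |a - b| := by
      gcongr
      · exact h s hs0
      · exact Real.exp_le_one_iff.mpr (neg_nonpos.mpr hs0)
    _ = 2 * K + |a - b| := by rw [one_mul]
  exact hs.not_ge hle

lemma sinh_add_log_one_add_le {x b : ℝ} (hb : 0 ≤ b) :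
    sinh (x + Real.log (1 + b)) ≤ sinh x + cosh x * b := by
  set y := Real.log (1 + b)
  have hexp : cosh y + sinh y = 1 + b := by rw [Real.cosh_add_sinh, Real.exp_log (by linarith)]
  have hmul : 0 ≤ (cosh x - sinh x) * (cosh y - 1) :=
    mul_nonneg (sub_nonneg.mpr (Real.sinh_lt_cosh x).le) (sub_nonneg.mpr (Real.one_le_cosh y))
  rw [Real.sinh_add]
  linear_combination hmul + cosh x * hexp

lemma add_sinh_mul_le_cosh_mul {S μ t : ℝ} (hS : 0 ≤ S) (hμ : 0 ≤ μ) :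
    S + sinh t * μ ≤ cosh t * (S + μ) := calc
  S + sinh t * μ ≤ cosh t * S + cosh t * μ := by
    gcongr
    · exact le_mul_of_one_le_left hS (Real.one_le_cosh t)
    · exact (Real.sinh_lt_cosh t).le
  _ = cosh t * (S + μ) := by ring

lemma pos_of_mul_pos_of_add_pos {a b : ℝ} (hmul : 0 < a * b) (hadd : 0 < a + b) : 0 < a := by
  rcases pos_and_pos_or_neg_and_neg_of_mul_pos hmul with ⟨ha, -⟩ | ⟨ha, hb⟩
  · exact ha
  · linarith

lemma lt_half_mul_add_mul {A B α β S : ℝ} (hA : 0 < A) (hB : 0 < B) (hα : 0 < α) (hβ : 0 < β)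
    (hS : 0 < S) (hAB : 1 < A * B) (hαβ : S ^ 2 ≤ α * β) : S < (A * β + B * α) / 2 := by
  refine lt_of_pow_lt_pow_left₀ 2 (by positivity) ?_
  calc S ^ 2 < (A * B) * (α * β) := by nlinarith [pow_pos hS 2]
    _ = ((A * β + B * α) / 2) ^ 2 - ((A * β - B * α) / 2) ^ 2 := by ring
    _ ≤ ((A * β + B * α) / 2) ^ 2 := sub_le_self _ (sq_nonneg _)

/-- The factor of `cosh D` by which the null coordinates of the points of a curve equidistant from
a geodesic are bounded below, in a frame adapted to a geodesic at distance `D` from the curve. Here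
`S` is `sinh` of the distance from the curve to its geodesic. -/
noncomputable def nullGap (S : ℝ) : ℝ := S ^ 2 / (8 * (1 + 2 * S ^ 2))

lemma nullGap_pos {S : ℝ} (hS : 0 < S) : 0 < nullGap S := by
  unfold nullGap
  positivity

lemma nullGap_mul_le {S q : ℝ} (hq : S ^ 2 ≤ q) : nullGap S * (8 * (1 + 2 * q)) ≤ q := by
  rw [nullGap, div_mul_eq_mul_div, div_le_iff₀ (by positivity)]
  linarith

lemma nullGap_mul_cosh_le_of_mul_eq {A B α β μ S t : ℝ} (hA : 0 < A) (hα : 0 < α) (hβ : 0 < β)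
    (hS : 0 ≤ S) (hμ : 0 ≤ μ) (hAB : A * B = cosh t ^ 2) (hαβ : α * β = μ ^ 2 - 1)
    (hSαβ : S ^ 2 ≤ α * β) (hle : (A * β + B * α) / 2 ≤ S + sinh t * μ)
    (hsum : (α + β) / 2 ≤ S + μ) : nullGap S * cosh t ≤ A := by
  have hcosh := Real.cosh_pos t
  have hBα : B * α ≤ 2 * cosh t * (S + μ) := by
    linarith [add_sinh_mul_le_cosh_mul (t := t) hS hμ, mul_pos hA hβ]
  have hprod : cosh t * (α * β) ≤ 4 * (S + μ) ^ 2 * A := by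
    refine le_of_mul_le_mul_left ?_ hcosh
    calc cosh t * (cosh t * (α * β)) = (B * α) * β * A := by linear_combination -(α * β) * hAB
      _ ≤ (2 * cosh t * (S + μ)) * (2 * (S + μ)) * A := by
        gcongr
        linarith
      _ = cosh t * (4 * (S + μ) ^ 2 * A) := by ring
  have hsq : (S + μ) ^ 2 ≤ 2 * (1 + 2 * (α * β)) := by linarith [sq_nonneg (S - μ)]
  have hq : 0 < 8 * (1 + 2 * (α * β)) := by positivity
  refine le_of_mul_le_mul_right ?_ hq
  calc nullGap S * cosh t * (8 * (1 + 2 * (α * β)))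
      = cosh t * (nullGap S * (8 * (1 + 2 * (α * β)))) := by ring
    _ ≤ cosh t * (α * β) := mul_le_mul_of_nonneg_left (nullGap_mul_le hSαβ) hcosh.le
    _ ≤ 4 * (2 * (1 + 2 * (α * β))) * A := hprod.trans (by gcongr)
    _ = A * (8 * (1 + 2 * (α * β))) := by ring

end Inequalities

section Lorentz

open Module
open Real (sinh cosh)
open scoped InnerProductSpace

variable {E : Type*} [NormedAddCommGroup E] [InnerProductSpace ℝ E]

/-- The Lorentz form on `ℝ × E`, with the sign for which the first factor is positive. The
hyperboloid `lorentz x x = 1`, `0 < x.1`, is a model of hyperbolic space. -/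
noncomputable def lorentz : LinearMap.BilinForm ℝ (ℝ × E) :=
  (LinearMap.mul ℝ ℝ).compl₁₂ (LinearMap.fst ℝ ℝ E) (LinearMap.fst ℝ ℝ E) -
    (innerₗ E).compl₁₂ (LinearMap.snd ℝ ℝ E) (LinearMap.snd ℝ ℝ E)

lemma lorentz_apply (x y : ℝ × E) : lorentz x y = x.1 * y.1 - ⟪x.2, y.2⟫_ℝ := rfl

lemma lorentz_comm (x y : ℝ × E) : lorentz x y = lorentz y x := by
  rw [lorentz_apply, lorentz_apply, mul_comm, real_inner_comm]

lemma fst_sq_mul_lorentz_self_le {x y : ℝ × E} (h : lorentz x y = 0) :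
    x.1 ^ 2 * lorentz y y ≤ -(lorentz x x * ‖y.2‖ ^ 2) := by
  have hfst : x.1 * y.1 = ⟪x.2, y.2⟫_ℝ := sub_eq_zero.mp h
  have hcs : (x.1 * y.1) ^ 2 ≤ (‖x.2‖ * ‖y.2‖) ^ 2 := by
    rw [hfst, sq_le_sq, abs_of_nonneg (by positivity : 0 ≤ ‖x.2‖ * ‖y.2‖)]
    exact abs_real_inner_le_norm _ _
  simp only [lorentz_apply, real_inner_self_eq_norm_sq]
  linear_combination hcs

lemma fst_sq_pos_of_lorentz_self_pos {x : ℝ × E} (hx : 0 < lorentz x x) : 0 < x.1 ^ 2 := by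
  rw [lorentz_apply, real_inner_self_eq_norm_sq] at hx
  linarith [sq_nonneg ‖x.2‖]

lemma lorentz_self_nonpos_of_orthogonal {x y : ℝ × E} (hx : 0 < lorentz x x)
    (h : lorentz x y = 0) : lorentz y y ≤ 0 := by
  refine nonpos_of_mul_nonpos_right ((fst_sq_mul_lorentz_self_le h).trans ?_)
    (fst_sq_pos_of_lorentz_self_pos hx)
  exact neg_nonpos.mpr (by positivity)

lemma eq_zero_of_lorentz_self_eq_zero {x y : ℝ × E} (hx : 0 < lorentz x x)
    (h : lorentz x y = 0) (hy : lorentz y y = 0) : y = 0 := by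
  have hle := fst_sq_mul_lorentz_self_le h
  rw [hy, mul_zero, neg_nonneg] at hle
  have hsnd : y.2 = 0 := norm_eq_zero.mp <| pow_eq_zero_iff two_ne_zero |>.mp <|
    le_antisymm (nonpos_of_mul_nonpos_right hle hx) (sq_nonneg _)
  have hfst : y.1 = 0 := by simpa [lorentz_apply, hsnd] using hy
  exact Prod.ext hfst hsnd

/-- `w` is a point of the hyperboloid and `v` a unit tangent vector at `w`. -/
structure IsUnitTangent (w v : ℝ × E) : Prop where
  base : lorentz w w = 1
  vec : lorentz v v = -1
  orth : lorentz w v = 0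

/-- The geodesic of the hyperboloid through `w` with initial velocity `v`. -/
noncomputable def hyperbolicLine (w v : ℝ × E) (s : ℝ) : ℝ × E := cosh s • w + sinh s • v

lemma lorentz_hyperbolicLine (x w v : ℝ × E) (s : ℝ) :
    lorentz x (hyperbolicLine w v s) = cosh s * lorentz x w + sinh s * lorentz x v := by
  simp [hyperbolicLine]

@[simp]
lemma hyperbolicLine_zero (w v : ℝ × E) : hyperbolicLine w v 0 = w := by simp [hyperbolicLine]

namespace IsUnitTangent

variable {w v n : ℝ × E}

lemma neg (h : IsUnitTangent w v) : IsUnitTangent w (-v) :=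
  ⟨h.base, by simp [h.vec], by simp [h.orth]⟩

lemma lorentz_self_hyperbolicLine (h : IsUnitTangent w v) (s : ℝ) :
    lorentz (hyperbolicLine w v s) (hyperbolicLine w v s) = 1 := by
  rw [lorentz_hyperbolicLine, lorentz_comm _ w, lorentz_comm _ v, lorentz_hyperbolicLine,
    lorentz_hyperbolicLine, lorentz_comm v w, h.base, h.vec, h.orth]
  linear_combination Real.cosh_sq s

lemma lorentz_base_add (h : IsUnitTangent w v) : lorentz w (w + v) = 1 := by
  rw [map_add, h.base, h.orth, add_zero]

lemma lorentz_self_add (h : IsUnitTangent w v) : lorentz (w + v) (w + v) = 0 := by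
  simp [h.base, h.vec, h.orth, lorentz_comm v w]

lemma eq_hyperbolicLine (h : IsUnitTangent w v) {x : ℝ × E} {s d : ℝ} (hd : d ≠ 0)
    (hx : lorentz x x = 1) (hxw : lorentz x w = cosh s)
    (hxd : lorentz x (hyperbolicLine w v d) = cosh (s - d)) : x = hyperbolicLine w v s := by
  have hxv : lorentz x v = -sinh s := by
    rw [lorentz_hyperbolicLine, hxw, Real.cosh_sub] at hxd
    refine mul_left_cancel₀ (Real.sinh_ne_zero.mpr hd) ?_
    linear_combination hxd
  have hxs : lorentz x (hyperbolicLine w v s) = 1 := by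
    rw [lorentz_hyperbolicLine, hxw, hxv]
    linear_combination Real.cosh_sq s
  have hws : lorentz w (hyperbolicLine w v s) = cosh s := by
    rw [lorentz_hyperbolicLine, h.base, h.orth]
    ring
  refine sub_eq_zero.mp (eq_zero_of_lorentz_self_eq_zero (x := w) (by simp [h.base]) ?_ ?_)
  · rw [map_sub, hws, lorentz_comm, hxw, sub_self]
  · simp only [map_sub, LinearMap.sub_apply, hx, hxs, lorentz_comm _ x,
      h.lorentz_self_hyperbolicLine]
    ring

-- The component of `x` orthogonal to `w` and `n` is orthogonal to `w`, hence spacelike.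
lemma lorentz_sq_add_one_le (h : IsUnitTangent w n) {x : ℝ × E} (hx : lorentz x x = 1) :
    lorentz x n ^ 2 + 1 ≤ lorentz x w ^ 2 := by
  have hle := lorentz_self_nonpos_of_orthogonal (x := w)
    (y := x - lorentz x w • w + lorentz x n • n) (by simp [h.base])
    (by simp [h.base, h.orth, lorentz_comm w x])
  simp only [map_add, map_sub, map_smul, LinearMap.add_apply, LinearMap.sub_apply,
    LinearMap.smul_apply, smul_eq_mul, h.base, h.vec, h.orth, hx, lorentz_comm w x,
    lorentz_comm n x, lorentz_comm n w] at hle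
  linarith

end IsUnitTangent

lemma exists_isUnitTangent_hyperbolicLine_eq {w x : ℝ × E} {d : ℝ} (hd : d ≠ 0)
    (hw : lorentz w w = 1) (hx : lorentz x x = 1) (hwx : lorentz w x = cosh d) :
    ∃ v, IsUnitTangent w v ∧ hyperbolicLine w v d = x := by
  have hs : sinh d ≠ 0 := Real.sinh_ne_zero.mpr hd
  refine ⟨(sinh d)⁻¹ • (x - cosh d • w), ⟨hw, ?_, ?_⟩, ?_⟩
  · simp only [map_sub, map_smul, LinearMap.sub_apply, LinearMap.smul_apply, smul_eq_mul,
      hw, hx, hwx, lorentz_comm x w]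
    field_simp
    linear_combination -Real.cosh_sq d
  · simp [hw, hwx]
  · simp [hyperbolicLine, smul_inv_smul₀ hs]

lemma exists_isUnitTangent_eqOn_hyperbolicLine {f : ℝ → ℝ × E} {T : Set ℝ} (h0 : 0 ∈ T)
    (h1 : 1 ∈ T) (hf : ∀ s ∈ T, ∀ t ∈ T, lorentz (f s) (f t) = cosh (s - t)) :
    ∃ v, IsUnitTangent (f 0) v ∧ Set.EqOn f (hyperbolicLine (f 0) v) T := by
  have hself (s) (hs : s ∈ T) : lorentz (f s) (f s) = 1 := by simp [hf s hs s hs]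
  obtain ⟨v, hv, hv1⟩ := exists_isUnitTangent_hyperbolicLine_eq one_ne_zero (hself 0 h0)
    (hself 1 h1) (by simp [hf 0 h0 1 h1])
  refine ⟨v, hv, fun s hs => hv.eq_hyperbolicLine one_ne_zero (hself s hs) ?_ ?_⟩
  · rw [hf s hs 0 h0, sub_zero]
  · rw [hv1, hf s hs 1 h1]

lemma finrank_real_prod_eq_three (E : Type*) [NormedAddCommGroup E] [InnerProductSpace ℝ E]
    [Fact (finrank ℝ E = 2)] : finrank ℝ (ℝ × E) = 3 := by
  have : FiniteDimensional ℝ E := .of_fact_finrank_eq_two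
  rw [finrank_prod, finrank_self, Fact.out (p := finrank ℝ E = 2)]

/-- An orthonormal frame of the Lorentz form at the point `w` of the hyperboloid. -/
structure IsLorentzFrame (w v n : ℝ × E) : Prop where
  tangent : IsUnitTangent w v
  normal : IsUnitTangent w n
  orth : lorentz v n = 0

namespace IsLorentzFrame

variable {w v n : ℝ × E}

lemma neg (h : IsLorentzFrame w v n) : IsLorentzFrame w (-v) n :=
  ⟨h.tangent.neg, h.normal, by simp [h.orth]⟩

lemma linearIndependent (h : IsLorentzFrame w v n) : LinearIndependent ℝ ![w, v, n] := by
  refine LinearMap.linearIndependent_of_isOrthoᵢ (B := lorentz) ?_ ?_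
  · intro i j hij
    change lorentz (![w, v, n] i) (![w, v, n] j) = 0
    fin_cases i <;> fin_cases j <;>
      simp_all [h.tangent.orth, h.normal.orth, h.orth, lorentz_comm v w, lorentz_comm n w,
        lorentz_comm n v]
  · intro i
    fin_cases i <;> simp [h.tangent.base, h.tangent.vec, h.normal.vec]

/-- Parseval's identity in the basis made of the normal `n` and of the null vectors `w + v` and
`w - v`, which represent the ideal endpoints of the geodesic with velocity `v`. -/
lemma lorentz_eq [Fact (finrank ℝ E = 2)] (h : IsLorentzFrame w v n) (x y : ℝ × E) :
    lorentz x y =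
      (lorentz x (w + v) * lorentz y (w - v) + lorentz x (w - v) * lorentz y (w + v)) / 2
        - lorentz x n * lorentz y n := by
  have hspan : Submodule.span ℝ (Set.range ![w, v, n]) = ⊤ :=
    h.linearIndependent.span_eq_top_of_card_eq_finrank
      (by rw [finrank_real_prod_eq_three, Fintype.card_fin])
  obtain ⟨c, rfl⟩ := Submodule.mem_span_range_iff_exists_fun ℝ |>.mp
    (hspan ▸ Submodule.mem_top (x := x))
  simp only [Fin.sum_univ_three, Matrix.cons_val, map_add, map_sub, map_smul,
    LinearMap.add_apply, LinearMap.smul_apply, smul_eq_mul,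
    h.tangent.base, h.tangent.vec, h.tangent.orth, h.normal.vec, h.normal.orth, h.orth,
    lorentz_comm v w, lorentz_comm n w, lorentz_comm n v, lorentz_comm y w, lorentz_comm y v,
    lorentz_comm y n]
  ring

end IsLorentzFrame

lemma IsUnitTangent.exists_isLorentzFrame [Fact (finrank ℝ E = 2)] {w v : ℝ × E}
    (h : IsUnitTangent w v) : ∃ n, IsLorentzFrame w v n := by
  have : FiniteDimensional ℝ E := .of_fact_finrank_eq_two
  obtain ⟨y, hy, hy0⟩ := Submodule.exists_mem_ne_zero_of_ne_bot
    (LinearMap.ker_ne_bot_of_finrank_lt (f := (lorentz w).prod (lorentz v))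
      (by rw [finrank_real_prod_eq_three E, finrank_prod, finrank_self]; norm_num))
  obtain ⟨hwy, hvy⟩ : lorentz w y = 0 ∧ lorentz v y = 0 := by simpa using hy
  have hneg : lorentz y y < 0 :=
    (lorentz_self_nonpos_of_orthogonal (by simp [h.base]) hwy).lt_of_ne
      fun h0 => hy0 (eq_zero_of_lorentz_self_eq_zero (by simp [h.base]) hwy h0)
  refine ⟨(√(-lorentz y y))⁻¹ • y, h, ⟨h.base, ?_, by simp [hwy]⟩, by simp [hvy]⟩
  have hsq := Real.sq_sqrt (neg_pos.mpr hneg).le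
  have hpos := Real.sqrt_pos.mpr (neg_pos.mpr hneg)
  simp only [map_smul, LinearMap.smul_apply, smul_eq_mul]
  field_simp
  linarith

variable {w v n m x : ℝ × E} {S D t : ℝ}

lemma lorentz_normal_pos (hD : 0 < D) (hS : 0 < S) (hmw : S ≤ lorentz m w)
    (hx₀ : lorentz m (hyperbolicLine w n (-D)) ≤ S) : 0 < lorentz m n := by
  rw [lorentz_hyperbolicLine, Real.cosh_neg, Real.sinh_neg] at hx₀
  refine pos_of_mul_pos_right ?_ (Real.sinh_pos_iff.mpr hD).le
  have hcosh : S < cosh D * S := lt_mul_of_one_lt_left hS (Real.one_lt_cosh.mpr hD.ne')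
  have hmono : cosh D * S ≤ cosh D * lorentz m w := by gcongr
  linarith

lemma lorentz_base_le (hS : 0 ≤ S) (hmn : 0 ≤ lorentz m n)
    (hx₀ : lorentz m (hyperbolicLine w n (-D)) ≤ S) : lorentz m w ≤ S + lorentz m n := by
  rw [lorentz_hyperbolicLine, Real.cosh_neg, Real.sinh_neg] at hx₀
  refine le_of_mul_le_mul_left ?_ (Real.cosh_pos D)
  linarith [add_sinh_mul_le_cosh_mul (t := D) hS hmn]

lemma sq_le_lorentz_add_mul_lorentz_sub (hS : 0 < S)
    (hx : ∀ s, S ≤ lorentz x (hyperbolicLine w v s)) :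
    S ^ 2 ≤ lorentz x (w + v) * lorentz x (w - v) := by
  rw [map_add, map_sub]
  exact sq_le_add_mul_sub_of_forall_le hS fun s => lorentz_hyperbolicLine x w v s ▸ hx s

lemma lorentz_add_pos_and_lorentz_sub_pos (hS : 0 < S)
    (hx : ∀ s, S ≤ lorentz x (hyperbolicLine w v s)) :
    0 < lorentz x (w + v) ∧ 0 < lorentz x (w - v) := by
  have hmul : 0 < lorentz x (w + v) * lorentz x (w - v) :=
    (pow_pos hS 2).trans_le (sq_le_lorentz_add_mul_lorentz_sub hS hx)
  have hadd : 0 < lorentz x (w + v) + lorentz x (w - v) := by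
    have hxw : S ≤ lorentz x w := by simpa using hx 0
    rw [map_add, map_sub]
    linarith
  exact ⟨pos_of_mul_pos_of_add_pos hmul hadd,
    pos_of_mul_pos_of_add_pos (by rwa [mul_comm]) (by rwa [add_comm])⟩

namespace IsLorentzFrame

variable [Fact (finrank ℝ E = 2)]

lemma lorentz_add_mul_lorentz_sub (h : IsLorentzFrame w v n) (x : ℝ × E) :
    lorentz x (w + v) * lorentz x (w - v) = lorentz x x + lorentz x n ^ 2 := by
  rw [h.lorentz_eq x x]
  ring

lemma sinh_le_lorentz_normal (h : IsLorentzFrame w v n) (hD : 0 < D) (hS : 0 < S)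
    (hm : ∀ s, S ≤ lorentz m (hyperbolicLine w v s))
    (hmD : lorentz m (hyperbolicLine w n (-D)) ≤ S) (hx : lorentz x x = 1)
    (hxD : ∀ s, cosh D ≤ lorentz x (hyperbolicLine w v s)) (hxm : lorentz x m ≤ S) :
    sinh D ≤ lorentz x n := by
  have hsinh : 0 < sinh D := Real.sinh_pos_iff.mpr hD
  have hsq := sq_le_lorentz_add_mul_lorentz_sub (Real.cosh_pos D) hxD
  rw [h.lorentz_add_mul_lorentz_sub, hx, Real.cosh_sq] at hsq
  have hmn : 0 < lorentz m n := lorentz_normal_pos hD hS (by simpa using hm 0) hmD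
  obtain ⟨hA, hB⟩ := lorentz_add_pos_and_lorentz_sub_pos (Real.cosh_pos D) hxD
  obtain ⟨hα, hβ⟩ := lorentz_add_pos_and_lorentz_sub_pos hS hm
  have hlt := lt_half_mul_add_mul hA hB hα hβ hS
    (by rw [h.lorentz_add_mul_lorentz_sub, hx]; linarith [pow_pos hsinh 2])
    (sq_le_lorentz_add_mul_lorentz_sub hS hm)
  have hxn : 0 < lorentz x n := by
    refine pos_of_mul_pos_left ?_ hmn.le
    rw [h.lorentz_eq x m] at hxm
    linarith
  exact le_of_sq_le_sq (by linarith) hxn.le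

lemma nullGap_mul_cosh_le (h : IsLorentzFrame w v n) (hD : 0 < D) (hS : 0 < S)
    (hmm : lorentz m m = -1) (hm : ∀ s, S ≤ lorentz m (hyperbolicLine w v s))
    (hmD : lorentz m (hyperbolicLine w n (-D)) ≤ S) (hx : lorentz x x = 1)
    (hxD : ∀ s, cosh D ≤ lorentz x (hyperbolicLine w v s)) (hxm : lorentz x m ≤ S) :
    nullGap S * cosh D ≤ lorentz x (w + v) ∧ nullGap S * cosh D ≤ lorentz x (w - v) := by
  have hmn : 0 < lorentz m n := lorentz_normal_pos hD hS (by simpa using hm 0) hmD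
  have hmw : lorentz m w ≤ S + lorentz m n := lorentz_base_le hS.le hmn.le hmD
  have hxn : sinh D ≤ lorentz x n := h.sinh_le_lorentz_normal hD hS hm hmD hx hxD hxm
  obtain ⟨t, ht⟩ := Real.sinh_surjective (lorentz x n)
  have hDt : cosh D ≤ cosh t := by
    rw [Real.cosh_le_cosh, abs_of_pos hD]
    exact (Real.sinh_le_sinh.mp (ht ▸ hxn)).trans (le_abs_self t)
  obtain ⟨hA, hB⟩ := lorentz_add_pos_and_lorentz_sub_pos (Real.cosh_pos D) hxD
  obtain ⟨hα, hβ⟩ := lorentz_add_pos_and_lorentz_sub_pos hS hm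
  have hSαβ := sq_le_lorentz_add_mul_lorentz_sub hS hm
  have hAB : lorentz x (w + v) * lorentz x (w - v) = cosh t ^ 2 := by
    rw [h.lorentz_add_mul_lorentz_sub, hx, ← ht, Real.cosh_sq, add_comm]
  have hαβ : lorentz m (w + v) * lorentz m (w - v) = lorentz m n ^ 2 - 1 := by
    rw [h.lorentz_add_mul_lorentz_sub, hmm]
    ring
  have hsum : (lorentz m (w + v) + lorentz m (w - v)) / 2 ≤ S + lorentz m n := by
    rw [map_add, map_sub]
    linarith
  have hle : (lorentz x (w + v) * lorentz m (w - v) + lorentz x (w - v) * lorentz m (w + v)) / 2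
      ≤ S + sinh t * lorentz m n := by
    rw [ht]
    linarith [h.lorentz_eq x m]
  have hmono : nullGap S * cosh D ≤ nullGap S * cosh t :=
    mul_le_mul_of_nonneg_left hDt (nullGap_pos hS).le
  constructor <;> refine hmono.trans ?_
  · exact nullGap_mul_cosh_le_of_mul_eq hA hα hβ hS.le hmn.le hAB hαβ hSαβ hle hsum
  · rw [mul_comm] at hAB hαβ hSαβ
    rw [add_comm] at hsum hle
    exact nullGap_mul_cosh_le_of_mul_eq hB hβ hα hS.le hmn.le hAB hαβ hSαβ hle hsum

lemma eq_smul_add_or_eq_smul_sub (h : IsLorentzFrame w v n) (hx : lorentz x x = 0)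
    (hxn : lorentz x n = 0) : x = lorentz x w • (w + v) ∨ x = lorentz x w • (w - v) := by
  have eq_smul {v' : ℝ × E} (hv' : IsUnitTangent w v') (h0 : lorentz x (w + v') = 0) :
      x = lorentz x w • (w + v') := by
    refine sub_eq_zero.mp (eq_zero_of_lorentz_self_eq_zero (x := w) (by simp [hv'.base]) ?_ ?_)
    · rw [map_sub, map_smul, hv'.lorentz_base_add, lorentz_comm w, smul_eq_mul, mul_one, sub_self]
    · simp only [map_sub, map_smul, LinearMap.sub_apply, LinearMap.smul_apply, smul_eq_mul,
        hx, h0, hv'.lorentz_self_add, lorentz_comm _ x]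
      ring
  have hmul : lorentz x (w + v) * lorentz x (w - v) = 0 := by
    rw [h.lorentz_add_mul_lorentz_sub, hx, hxn]
    ring
  rcases mul_eq_zero.mp hmul with h0 | h0
  · exact .inl (eq_smul h.tangent h0)
  · rw [sub_eq_add_neg] at h0 ⊢
    exact .inr (eq_smul h.neg.tangent h0)

variable {u u₁ u₂ : ℝ × E} {a : ℝ}

lemma add_eq_smul_add_or_add_eq_smul_sub (h : IsLorentzFrame w v n)
    (hu : IsUnitTangent (hyperbolicLine w n a) u)
    (hun : lorentz (hyperbolicLine w n a + u) n = 0) :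
    hyperbolicLine w n a + u = (cosh a)⁻¹ • (w + v) ∨
      hyperbolicLine w n a + u = (cosh a)⁻¹ • (w - v) := by
  have hcoeff : lorentz (hyperbolicLine w n a + u) w = (cosh a)⁻¹ := by
    have hbase := hu.lorentz_base_add
    rw [lorentz_comm, lorentz_hyperbolicLine, hun, mul_zero, add_zero] at hbase
    exact eq_inv_of_mul_eq_one_right hbase
  rw [← hcoeff]
  exact h.eq_smul_add_or_eq_smul_sub hu.lorentz_self_add hun

lemma cosh_sq_eq_two (h : IsLorentzFrame w v n) (hu₁ : IsUnitTangent (hyperbolicLine w n a) u₁)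
    (hu₂ : IsUnitTangent (hyperbolicLine w n a) u₂) (hu : lorentz u₁ u₂ = 0)
    (hun₁ : lorentz (hyperbolicLine w n a + u₁) n = 0)
    (hun₂ : lorentz (hyperbolicLine w n a + u₂) n = 0) : cosh a ^ 2 = 2 := by
  have hone : lorentz (hyperbolicLine w n a + u₁) (hyperbolicLine w n a + u₂) = 1 := by
    simp only [map_add, LinearMap.add_apply, hu₁.base, hu₂.orth, hu, hu₁.orth,
      lorentz_comm u₁ (hyperbolicLine w n a), add_zero]
  have hadd : lorentz (w + v) (w + v) = 0 := h.tangent.lorentz_self_add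
  have hsub : lorentz (w - v) (w - v) = 0 := sub_eq_add_neg w v ▸ h.neg.tangent.lorentz_self_add
  have hmixed : lorentz (w + v) (w - v) = 2 := by
    simp only [map_add, map_sub, LinearMap.add_apply, h.tangent.base, h.tangent.vec,
      h.tangent.orth, lorentz_comm v w]
    norm_num
  have hcosh : cosh a ≠ 0 := (Real.cosh_pos a).ne'
  rcases h.add_eq_smul_add_or_add_eq_smul_sub hu₁ hun₁ with h₁ | h₁ <;>
    rcases h.add_eq_smul_add_or_add_eq_smul_sub hu₂ hun₂ with h₂ | h₂ <;>
    rw [h₁, h₂, map_smul, map_smul, LinearMap.smul_apply, smul_eq_mul, smul_eq_mul] at hone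
  · rw [hadd, mul_zero, mul_zero] at hone
    exact absurd hone zero_ne_one
  · rw [hmixed] at hone
    field_simp at hone
    exact hone.symm
  · rw [lorentz_comm, hmixed] at hone
    field_simp at hone
    exact hone.symm
  · rw [hsub, mul_zero, mul_zero] at hone
    exact absurd hone zero_ne_one

lemma add_div_two_le_neg_lorentz (h : IsLorentzFrame w v n) (ha : 0 ≤ a) (hcosh : cosh a ^ 2 = 2)
    (hu : IsUnitTangent (hyperbolicLine w n a) u)
    (hun : lorentz (hyperbolicLine w n a + u) n = 0) {b : ℝ} (hb : 0 ≤ b)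
    (hadd : b ≤ lorentz x (w + v)) (hsub : b ≤ lorentz x (w - v)) :
    lorentz x n + b / 2 ≤ -lorentz x u := by
  have hsinh : sinh a = 1 := by
    have hsq := Real.cosh_sq a
    exact pow_eq_one_iff_of_nonneg (Real.sinh_nonneg_iff.mpr ha) two_ne_zero |>.mp (by linarith)
  have hinv : 1 / 2 ≤ (cosh a)⁻¹ := by
    rw [one_div]
    gcongr
    nlinarith
  have eq_of_add {v' : ℝ × E} (h' : hyperbolicLine w n a + u = (cosh a)⁻¹ • (w + v')) :
      -lorentz x u = lorentz x n + (cosh a)⁻¹ * lorentz x (w - v') := by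
    have hxu := congrArg (lorentz x) h'
    simp only [hyperbolicLine, map_add, map_sub, map_smul, smul_eq_mul, hsinh] at hxu ⊢
    have hinv2 : cosh a = 2 * (cosh a)⁻¹ := by field_simp; exact hcosh
    linear_combination -hxu + lorentz x w * hinv2
  have hle {y : ℝ} (hy : b ≤ y) : lorentz x n + b / 2 ≤ lorentz x n + (cosh a)⁻¹ * y := by
    gcongr
    calc b / 2 = 1 / 2 * b := by ring
      _ ≤ (cosh a)⁻¹ * y := by gcongr
  rcases h.add_eq_smul_add_or_add_eq_smul_sub hu hun with h' | h'
  · rw [eq_of_add h']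
    exact hle hsub
  · rw [sub_eq_add_neg] at h'
    rw [eq_of_add h', sub_neg_eq_add]
    exact hle hadd

end IsLorentzFrame

end Lorentz

section UpperHalfPlane

attribute [local instance] Complex.finrank_real_complex_fact

open Real (sinh cosh)

/-- The embedding of the upper half-plane in `ℝ × ℂ` as the hyperboloid. -/
noncomputable def toHyperboloid (z : UpperHalfPlane) : ℝ × ℂ :=
  ((z.re ^ 2 + z.im ^ 2 + 1) / (2 * z.im), ⟨(z.re ^ 2 + z.im ^ 2 - 1) / (2 * z.im), z.re / z.im⟩)

lemma lorentz_toHyperboloid (z w : UpperHalfPlane) :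
    lorentz (toHyperboloid z) (toHyperboloid w) = cosh (dist z w) := by
  have hz := z.im_pos.ne'
  have hw := w.im_pos.ne'
  rw [UpperHalfPlane.cosh_dist, Complex.dist_eq, Complex.sq_norm, Complex.normSq_apply]
  simp only [lorentz_apply, toHyperboloid, Complex.inner, Complex.mul_re, Complex.conj_re,
    Complex.conj_im, Complex.sub_re, Complex.sub_im, UpperHalfPlane.coe_re, UpperHalfPlane.coe_im]
  field_simp
  ring

lemma lorentz_toHyperboloid_self (z : UpperHalfPlane) :
    lorentz (toHyperboloid z) (toHyperboloid z) = 1 := by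
  rw [lorentz_toHyperboloid, dist_self, Real.cosh_zero]

lemma cosh_le_lorentz_toHyperboloid_iff {z w : UpperHalfPlane} {d : ℝ} (hd : 0 ≤ d) :
    cosh d ≤ lorentz (toHyperboloid z) (toHyperboloid w) ↔ d ≤ dist z w := by
  rw [lorentz_toHyperboloid, Real.cosh_le_cosh, abs_of_nonneg hd, abs_of_nonneg dist_nonneg]

lemma exists_isUnitTangent_toHyperboloid {f : ℝ → UpperHalfPlane} {T : Set ℝ} (h0 : 0 ∈ T)
    (h1 : 1 ∈ T) (hf : ∀ s ∈ T, ∀ t ∈ T, dist (f s) (f t) = |s - t|) :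
    ∃ v, IsUnitTangent (toHyperboloid (f 0)) v ∧
      ∀ s ∈ T, toHyperboloid (f s) = hyperbolicLine (toHyperboloid (f 0)) v s :=
  exists_isUnitTangent_eqOn_hyperbolicLine (f := toHyperboloid ∘ f) h0 h1 fun s hs t ht => by
    rw [Function.comp_apply, Function.comp_apply, lorentz_toHyperboloid, hf s hs t ht,
      Real.cosh_abs]

lemma forall_hyperbolicLine_of_forall_mem {γ : Set UpperHalfPlane} {w v : ℝ × ℂ}
    (hline : toHyperboloid '' γ = Set.range (hyperbolicLine w v)) {P : ℝ × ℂ → Prop}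
    (hP : ∀ q ∈ γ, P (toHyperboloid q)) (s : ℝ) : P (hyperbolicLine w v s) := by
  obtain ⟨q, hq, hqs⟩ := hline.symm.subset ⟨s, rfl⟩
  exact hqs ▸ hP q hq

lemma IsGeodesicLine.exists_isUnitTangent {γ : Set UpperHalfPlane} (hγ : IsGeodesicLine γ)
    {w : UpperHalfPlane} (hw : w ∈ γ) :
    ∃ v, IsUnitTangent (toHyperboloid w) v ∧
      toHyperboloid '' γ = Set.range (hyperbolicLine (toHyperboloid w) v) := by
  obtain ⟨g, hg, rfl⟩ := hγ
  obtain ⟨t, rfl⟩ := hw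
  obtain ⟨v, hv, hline⟩ := exists_isUnitTangent_toHyperboloid (f := fun s => g (s + t))
    (Set.mem_univ 0) (Set.mem_univ 1) (by simp [hg.dist_eq, Real.dist_eq])
  simp only [zero_add, Set.mem_univ, true_imp_iff] at hv hline
  refine ⟨v, hv, ?_⟩
  rw [← Set.range_comp, ← (Equiv.addRight t).surjective.range_comp]
  exact congrArg Set.range (funext hline)

lemma IsRayFrom.exists_isUnitTangent {f : ℝ → UpperHalfPlane} {p : UpperHalfPlane}
    (hf : IsRayFrom f p) :
    ∃ u, IsUnitTangent (toHyperboloid p) u ∧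
      ∀ s, 0 ≤ s → toHyperboloid (f s) = hyperbolicLine (toHyperboloid p) u s := by
  obtain ⟨rfl, hdist⟩ := hf
  exact exists_isUnitTangent_toHyperboloid (T := Set.Ici 0) (Set.mem_Ici.mpr le_rfl)
    (Set.mem_Ici.mpr zero_le_one) fun s hs t ht => hdist s t hs ht

/-- `n` is a unit normal of the subset `G` of a geodesic: in the hyperboloid, the plane
orthogonal to `n` cuts out a geodesic containing `G`. -/
structure IsUnitNormal (n : ℝ × ℂ) (G : Set UpperHalfPlane) : Prop where
  vec : lorentz n n = -1
  orth : ∀ q ∈ G, lorentz (toHyperboloid q) n = 0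

namespace IsUnitNormal

variable {n : ℝ × ℂ} {G : Set UpperHalfPlane}

lemma neg (h : IsUnitNormal n G) : IsUnitNormal (-n) G :=
  ⟨by simp [h.vec], fun q hq => by simp [h.orth q hq]⟩

lemma abs_lorentz_le_sinh_dist (h : IsUnitNormal n G) (z : UpperHalfPlane) {q : UpperHalfPlane}
    (hq : q ∈ G) : |lorentz (toHyperboloid z) n| ≤ sinh (dist z q) := by
  have hn : IsUnitTangent (toHyperboloid q) n := ⟨lorentz_toHyperboloid_self q, h.vec, h.orth q hq⟩
  have hsq := hn.lorentz_sq_add_one_le (lorentz_toHyperboloid_self z)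
  rw [lorentz_toHyperboloid, Real.cosh_sq] at hsq
  exact abs_le_of_sq_le_sq (by linarith) (Real.sinh_nonneg_iff.mpr dist_nonneg)

lemma abs_lorentz_le_sinh_infDist (h : IsUnitNormal n G) (hG : G.Nonempty) (z : UpperHalfPlane) :
    |lorentz (toHyperboloid z) n| ≤ sinh (infDist z G) := by
  rw [← Real.arsinh_le_arsinh, Real.arsinh_sinh, le_infDist hG]
  intro q hq
  rw [← Real.sinh_le_sinh, Real.sinh_arsinh]
  exact h.abs_lorentz_le_sinh_dist z hq

lemma isLorentzFrame (h : IsUnitNormal n G) {w v : ℝ × ℂ} (hv : IsUnitTangent w v)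
    (hline : toHyperboloid '' G = Set.range (hyperbolicLine w v)) : IsLorentzFrame w v n := by
  have hzero (s : ℝ) : cosh s * lorentz w n + sinh s * lorentz v n = 0 := by
    rw [lorentz_comm w, lorentz_comm v, ← lorentz_hyperbolicLine, lorentz_comm]
    exact forall_hyperbolicLine_of_forall_mem hline (P := (lorentz · n = 0)) h.orth s
  have hw : lorentz w n = 0 := by simpa using hzero 0
  refine ⟨hv, ⟨hv.base, h.vec, hw⟩, ?_⟩
  simpa [hw, Real.sinh_eq_zero] using hzero 1

end IsUnitNormal

lemma IsLorentzFrame.isUnitNormal {G : Set UpperHalfPlane} {w v n : ℝ × ℂ}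
    (h : IsLorentzFrame w v n) (hline : toHyperboloid '' G = Set.range (hyperbolicLine w v)) :
    IsUnitNormal n G := by
  refine ⟨h.normal.vec, fun q hq => ?_⟩
  obtain ⟨s, hs⟩ := hline.subset ⟨q, hq, rfl⟩
  rw [← hs, lorentz_comm, lorentz_hyperbolicLine, lorentz_comm, h.normal.orth, lorentz_comm, h.orth]
  ring

lemma IsGeodesicLine.nonempty {G : Set UpperHalfPlane} (hG : IsGeodesicLine G) : G.Nonempty := by
  obtain ⟨g, -, rfl⟩ := hG
  exact Set.range_nonempty g

lemma IsGeodesicLine.exists_isUnitNormal {G : Set UpperHalfPlane} (hG : IsGeodesicLine G) :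
    ∃ n, IsUnitNormal n G := by
  obtain ⟨w, hw⟩ := hG.nonempty
  obtain ⟨v, hv, hline⟩ := hG.exists_isUnitTangent hw
  obtain ⟨n, hn⟩ := hv.exists_isLorentzFrame
  exact ⟨n, hn.isUnitNormal hline⟩

lemma cosh_sq_le_lorentz_mul_lorentz {γ : Set UpperHalfPlane} {w v : ℝ × ℂ} {z : UpperHalfPlane}
    {d : ℝ} (hline : toHyperboloid '' γ = Set.range (hyperbolicLine w v)) (hd : 0 ≤ d)
    (hz : ∀ q ∈ γ, d ≤ dist z q) :
    cosh d ^ 2 ≤ lorentz (toHyperboloid z) (w + v) * lorentz (toHyperboloid z) (w - v) := by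
  refine sq_le_lorentz_add_mul_lorentz_sub (Real.cosh_pos d) <|
    forall_hyperbolicLine_of_forall_mem hline (P := (cosh d ≤ lorentz (toHyperboloid z) ·))
      fun q hq => ?_
  exact (cosh_le_lorentz_toHyperboloid_iff hd).mpr (hz q hq)

lemma IsGeodesicLine.abs_lorentz_eq_sinh_infDist {G : Set UpperHalfPlane} (hG : IsGeodesicLine G)
    {n : ℝ × ℂ} (hn : IsUnitNormal n G) (z : UpperHalfPlane) :
    |lorentz (toHyperboloid z) n| = sinh (infDist z G) := by
  refine (hn.abs_lorentz_le_sinh_infDist hG.nonempty z).antisymm ?_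
  obtain ⟨w, hw⟩ := hG.nonempty
  obtain ⟨v, hv, hline⟩ := hG.exists_isUnitTangent hw
  have hnull := (hn.isLorentzFrame hv hline).lorentz_eq (toHyperboloid z) (toHyperboloid z)
  have hcosh := cosh_sq_le_lorentz_mul_lorentz hline infDist_nonneg
    fun q hq => infDist_le_dist_of_mem (x := z) hq
  rw [lorentz_toHyperboloid_self] at hnull
  rw [Real.cosh_sq] at hcosh
  exact (le_abs_self _).trans (sq_le_sq.mp (by linarith))

lemma IsGeodesicLine.exists_isUnitNormal_forall_sinh_lt {G γ : Set UpperHalfPlane}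
    (hG : IsGeodesicLine G) (hγ : IsGeodesicLine γ) {r : ℝ} (hr : 0 ≤ r)
    (h : ∀ q ∈ γ, r < infDist q G) :
    ∃ m, IsUnitNormal m G ∧ ∀ q ∈ γ, sinh r < lorentz (toHyperboloid q) m := by
  obtain ⟨m, hm⟩ := hG.exists_isUnitNormal
  obtain ⟨w, hw⟩ := hγ.nonempty
  obtain ⟨v, -, hline⟩ := hγ.exists_isUnitTangent hw
  have habs (q) (hq : q ∈ γ) : sinh r < |lorentz (toHyperboloid q) m| := by
    rw [hG.abs_lorentz_eq_sinh_infDist hm]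
    exact Real.sinh_lt_sinh.mpr (h q hq)
  have hsinh : 0 ≤ sinh r := Real.sinh_nonneg_iff.mpr hr
  let φ (s : ℝ) : ℝ := lorentz m (hyperbolicLine (toHyperboloid w) v s)
  have hφ : Continuous φ := by
    simp only [φ, lorentz_hyperbolicLine]
    fun_prop
  have hmem (q) (hq : q ∈ γ) : ∃ s, φ s = lorentz (toHyperboloid q) m := by
    obtain ⟨s, hs⟩ := hline.subset ⟨q, hq, rfl⟩
    exact ⟨s, by rw [lorentz_comm, ← hs]⟩
  have hφ0 (s : ℝ) : |φ s| ≠ 0 := by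
    refine forall_hyperbolicLine_of_forall_mem hline (P := (|lorentz m ·| ≠ 0)) (fun q hq => ?_) s
    rw [lorentz_comm]
    exact (hsinh.trans_lt (habs q hq)).ne'
  rcases isPreconnected_univ.eq_or_eq_neg_of_sq_eq hφ.continuousOn hφ.abs.continuousOn
    (fun s _ => (sq_abs (φ s)).symm) (fun {s} _ => hφ0 s) with hpos | hneg
  · refine ⟨m, hm, fun q hq => (habs q hq).trans_eq ?_⟩
    obtain ⟨s, hs⟩ := hmem q hq
    exact hs ▸ (hpos (Set.mem_univ s)).symm
  · refine ⟨-m, hm.neg, fun q hq => (habs q hq).trans_eq ?_⟩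
    obtain ⟨s, hs⟩ := hmem q hq
    rw [map_neg, ← hs]
    exact (neg_eq_iff_eq_neg.mpr (hneg (Set.mem_univ s))).symm

lemma IsGeodesicLine.exists_isLorentzFrame_of_forall_le_dist {γ : Set UpperHalfPlane}
    (hγ : IsGeodesicLine γ) {z₀ w₀ : UpperHalfPlane} (hw₀ : w₀ ∈ γ) {D : ℝ} (hD : 0 < D)
    (hdist : dist z₀ w₀ = D) (hmin : ∀ w ∈ γ, D ≤ dist z₀ w) :
    ∃ v n, IsLorentzFrame (toHyperboloid w₀) v n ∧
      toHyperboloid '' γ = Set.range (hyperbolicLine (toHyperboloid w₀) v) ∧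
      toHyperboloid z₀ = hyperbolicLine (toHyperboloid w₀) n (-D) := by
  obtain ⟨v, hv, hline⟩ := hγ.exists_isUnitTangent hw₀
  obtain ⟨n, hn, hz₀⟩ := exists_isUnitTangent_hyperbolicLine_eq (neg_ne_zero.mpr hD.ne')
    (lorentz_toHyperboloid_self w₀) (lorentz_toHyperboloid_self z₀)
    (by rw [lorentz_toHyperboloid, dist_comm, hdist, Real.cosh_neg])
  refine ⟨v, n, ⟨hv, hn, ?_⟩, hline, hz₀.symm⟩
  have hle := cosh_sq_le_lorentz_mul_lorentz hline hD.le hmin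
  rw [map_add, map_sub, lorentz_toHyperboloid, hdist] at hle
  have hzero : lorentz (toHyperboloid z₀) v = 0 :=
    pow_eq_zero_iff two_ne_zero |>.mp (le_antisymm (by linarith) (sq_nonneg _))
  rw [lorentz_comm, ← hz₀, lorentz_hyperbolicLine, lorentz_comm v, hv.orth, mul_zero, zero_add]
    at hzero
  exact (mul_eq_zero.mp hzero).resolve_left (Real.sinh_ne_zero.mpr (neg_ne_zero.mpr hD.ne'))

lemma lorentz_eq_zero_of_cosh_dist_eq_mul {f₁ f₂ : ℝ → UpperHalfPlane} {p u₁ u₂ : ℝ × ℂ}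
    (hu₁ : IsUnitTangent p u₁) (hu₂ : IsUnitTangent p u₂) {s t : ℝ} (hs : s ≠ 0) (ht : t ≠ 0)
    (hf₁ : toHyperboloid (f₁ s) = hyperbolicLine p u₁ s)
    (hf₂ : toHyperboloid (f₂ t) = hyperbolicLine p u₂ t)
    (h : cosh (dist (f₁ s) (f₂ t)) = cosh s * cosh t) : lorentz u₁ u₂ = 0 := by
  rw [← lorentz_toHyperboloid, hf₁, hf₂, lorentz_hyperbolicLine, lorentz_comm _ p,
    lorentz_comm _ u₂, lorentz_hyperbolicLine, lorentz_hyperbolicLine, hu₁.base, hu₁.orth,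
    lorentz_comm u₂ p, hu₂.orth, lorentz_comm u₂] at h
  have hmul : sinh t * sinh s * lorentz u₁ u₂ = 0 := by linear_combination h
  exact (mul_eq_zero.mp hmul).resolve_left
    (mul_ne_zero (Real.sinh_ne_zero.mpr ht) (Real.sinh_ne_zero.mpr hs))

lemma isUnitNormal_image_of_eqOn_hyperbolicLine {f : ℝ → UpperHalfPlane} {T : Set ℝ}
    {p u n : ℝ × ℂ} (hn : IsUnitTangent p n) (hun : lorentz u n = 0)
    (hf : ∀ s ∈ T, toHyperboloid (f s) = hyperbolicLine p u s) : IsUnitNormal n (f '' T) := by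
  refine ⟨hn.vec, ?_⟩
  rintro _ ⟨s, hs, rfl⟩
  rw [hf s hs, lorentz_comm, lorentz_hyperbolicLine, lorentz_comm n, hn.orth, lorentz_comm n, hun]
  ring

lemma IsUnitNormal.lorentz_add_eq_zero_of_infDist_le {γ : Set UpperHalfPlane} {n : ℝ × ℂ}
    (hn : IsUnitNormal n γ) (hγ : γ.Nonempty) {f : ℝ → UpperHalfPlane} {p u : ℝ × ℂ} {C : ℝ}
    (hf : ∀ s, 0 ≤ s → toHyperboloid (f s) = hyperbolicLine p u s)
    (hC : ∀ s, 0 ≤ s → infDist (f s) γ ≤ C) : lorentz (p + u) n = 0 := by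
  rw [map_add, LinearMap.add_apply, lorentz_comm p, lorentz_comm u]
  refine add_eq_zero_of_abs_cosh_mul_add_sinh_mul_le (K := sinh C) fun s hs => ?_
  rw [← lorentz_hyperbolicLine, ← hf s hs, lorentz_comm]
  exact (hn.abs_lorentz_le_sinh_infDist hγ _).trans (Real.sinh_le_sinh.mpr (hC s hs))

lemma IsUnitTangent.toHyperboloid_eq_of_dist_eq_add {z₀ w₀ p : UpperHalfPlane} {n : ℝ × ℂ} {D : ℝ}
    (hn : IsUnitTangent (toHyperboloid w₀) n) (hD : D ≠ 0)
    (hz₀ : toHyperboloid z₀ = hyperbolicLine (toHyperboloid w₀) n (-D))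
    (hp : dist z₀ p = D + dist w₀ p) :
    toHyperboloid p = hyperbolicLine (toHyperboloid w₀) n (dist w₀ p) := by
  refine hn.eq_hyperbolicLine (neg_ne_zero.mpr hD) (lorentz_toHyperboloid_self p) ?_ ?_
  · rw [lorentz_comm, lorentz_toHyperboloid]
  · rw [← hz₀, lorentz_comm, lorentz_toHyperboloid, hp, sub_neg_eq_add, add_comm]

lemma IsUnitNormal.add_log_le_dist {R : Set UpperHalfPlane} {u : ℝ × ℂ} (hu : IsUnitNormal u R)
    {z q : UpperHalfPlane} (hq : q ∈ R) {D b : ℝ} (hb : 0 ≤ b)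
    (hle : sinh D + cosh D * b ≤ -lorentz (toHyperboloid z) u) :
    D + Real.log (1 + b) ≤ dist z q := by
  refine Real.sinh_le_sinh.mp ((sinh_add_log_one_add_le hb).trans (hle.trans ?_))
  exact (neg_le_abs _).trans (hu.abs_lorentz_le_sinh_dist z hq)

lemma IsLorentzFrame.exists_isUnitNormal_of_orthogonal_rays {γ : Set UpperHalfPlane}
    {f₁ f₂ : ℝ → UpperHalfPlane} {p : UpperHalfPlane} {w v n : ℝ × ℂ} {a : ℝ}
    (hF : IsLorentzFrame w v n) (hγ : γ.Nonempty) (hn : IsUnitNormal n γ) (ha : 0 ≤ a)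
    (hp : toHyperboloid p = hyperbolicLine w n a) (hf₁ : IsRayFrom f₁ p) (hf₂ : IsRayFrom f₂ p)
    (horth : ∀ s t, 0 ≤ s → 0 ≤ t → cosh (dist (f₁ s) (f₂ t)) = cosh s * cosh t)
    (hb₁ : ∃ C, ∀ s, 0 ≤ s → infDist (f₁ s) γ ≤ C) (hb₂ : ∃ C, ∀ s, 0 ≤ s → infDist (f₂ s) γ ≤ C) :
    ∃ u₁ u₂, IsUnitNormal u₁ (f₁ '' Set.Ici 0) ∧ IsUnitNormal u₂ (f₂ '' Set.Ici 0) ∧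
      ∀ x b, 0 ≤ b → b ≤ lorentz x (w + v) → b ≤ lorentz x (w - v) →
        lorentz x n + b / 2 ≤ -lorentz x u₁ ∧ lorentz x n + b / 2 ≤ -lorentz x u₂ := by
  obtain ⟨u₁, hu₁, hline₁⟩ := hf₁.exists_isUnitTangent
  obtain ⟨u₂, hu₂, hline₂⟩ := hf₂.exists_isUnitTangent
  obtain ⟨C₁, hC₁⟩ := hb₁
  obtain ⟨C₂, hC₂⟩ := hb₂
  have hnull₁ := hn.lorentz_add_eq_zero_of_infDist_le hγ hline₁ hC₁
  have hnull₂ := hn.lorentz_add_eq_zero_of_infDist_le hγ hline₂ hC₂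
  have hu : lorentz u₁ u₂ = 0 := lorentz_eq_zero_of_cosh_dist_eq_mul hu₁ hu₂ one_ne_zero
    one_ne_zero (hline₁ 1 zero_le_one) (hline₂ 1 zero_le_one) (horth 1 1 zero_le_one zero_le_one)
  refine ⟨u₂, u₁, isUnitNormal_image_of_eqOn_hyperbolicLine hu₂ hu hline₁,
    isUnitNormal_image_of_eqOn_hyperbolicLine hu₁ (lorentz_comm u₁ u₂ ▸ hu) hline₂, ?_⟩
  rw [hp] at hu₁ hu₂ hnull₁ hnull₂
  have hcosh : cosh a ^ 2 = 2 := hF.cosh_sq_eq_two hu₁ hu₂ hu hnull₁ hnull₂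
  exact fun x b hb hadd hsub =>
    ⟨hF.add_div_two_le_neg_lorentz ha hcosh hu₂ hnull₂ hb hadd hsub,
      hF.add_div_two_le_neg_lorentz ha hcosh hu₁ hnull₁ hb hadd hsub⟩

lemma IsLorentzFrame.sinh_le_and_nullGap_mul_cosh_le {γ : Set UpperHalfPlane} {w v n m : ℝ × ℂ}
    {S D : ℝ} (hF : IsLorentzFrame w v n)
    (hline : toHyperboloid '' γ = Set.range (hyperbolicLine w v))
    (hD : 0 < D) (hS : 0 < S) (hmm : lorentz m m = -1)
    (hm : ∀ q ∈ γ, S < lorentz (toHyperboloid q) m)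
    (hmD : lorentz m (hyperbolicLine w n (-D)) ≤ S) {z : UpperHalfPlane}
    (hzD : ∀ q ∈ γ, D ≤ dist z q) (hzm : lorentz (toHyperboloid z) m ≤ S) :
    sinh D ≤ lorentz (toHyperboloid z) n ∧
      nullGap S * cosh D ≤ lorentz (toHyperboloid z) (w + v) ∧
      nullGap S * cosh D ≤ lorentz (toHyperboloid z) (w - v) := by
  have hm' (s : ℝ) : S ≤ lorentz m (hyperbolicLine w v s) :=
    forall_hyperbolicLine_of_forall_mem hline (P := (S ≤ lorentz m ·))
      (fun q hq => lorentz_comm m _ ▸ (hm q hq).le) s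
  have hzD' (s : ℝ) : cosh D ≤ lorentz (toHyperboloid z) (hyperbolicLine w v s) :=
    forall_hyperbolicLine_of_forall_mem hline (P := (cosh D ≤ lorentz (toHyperboloid z) ·))
      (fun q hq => (cosh_le_lorentz_toHyperboloid_iff hD.le).mpr (hzD q hq)) s
  have hz := lorentz_toHyperboloid_self z
  exact ⟨hF.sinh_le_lorentz_normal hD hS hm' hmD hz hzD' hzm,
    hF.nullGap_mul_cosh_le hD hS hmm hm' hmD hz hzD' hzm⟩

end UpperHalfPlane

lemma artanh_pos {κ : ℝ} (hκ₀ : 0 < κ) (hκ₁ : κ < 1) : 0 < artanh κ :=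
  half_pos <| Real.log_pos <| (one_lt_div (by linarith)).mpr (by linarith)

theorem stmt18_general {r : ℝ} (hr : 0 < r) : ∃ d > 0,
    ∀ (G c γ : Set UpperHalfPlane) (f₁ f₂ : ℝ → UpperHalfPlane)
      (p z₀ w₀ : UpperHalfPlane) (D : ℝ),
      IsGeodesicLine G → IsGeodesicLine γ →
      (∀ z ∈ c, Metric.infDist z G ≤ r) →
      (∀ w ∈ γ, r < Metric.infDist w G) →
      z₀ ∈ c → w₀ ∈ γ → dist z₀ w₀ = D →
      (∀ z ∈ c, ∀ w ∈ γ, D ≤ dist z w) →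
      dist z₀ p = dist z₀ w₀ + dist w₀ p →
      IsRayFrom f₁ p → IsRayFrom f₂ p →
      (∀ s t : ℝ, 0 ≤ s → 0 ≤ t →
        Real.cosh (dist (f₁ s) (f₂ t)) = Real.cosh s * Real.cosh t) →
      (∃ C : ℝ, ∀ s : ℝ, 0 ≤ s → Metric.infDist (f₁ s) γ ≤ C) →
      (∃ C : ℝ, ∀ s : ℝ, 0 ≤ s → Metric.infDist (f₂ s) γ ≤ C) →
      ∀ z ∈ c, ∀ s : ℝ, 0 ≤ s → D + d ≤ dist z (f₁ s) ∧ D + d ≤ dist z (f₂ s) := by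
  have hS : 0 < Real.sinh r := Real.sinh_pos_iff.mpr hr
  have hgap : 0 < nullGap (Real.sinh r) / 2 := half_pos (nullGap_pos hS)
  refine ⟨Real.log (1 + nullGap (Real.sinh r) / 2), Real.log_pos (by linarith), ?_⟩
  intro G c γ f₁ f₂ p z₀ w₀ D hG hγ hc hγG hz₀ hw₀ hD hmin hp hf₁ hf₂ horth hb₁ hb₂ z hz s hs
  obtain ⟨m, hm, hmγ⟩ := hG.exists_isUnitNormal_forall_sinh_lt hγ hr.le hγG
  have hmc (x) (hx : x ∈ c) : lorentz (toHyperboloid x) m ≤ Real.sinh r :=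
    (le_abs_self _).trans <| (hm.abs_lorentz_le_sinh_infDist hG.nonempty x).trans <|
      Real.sinh_le_sinh.mpr (hc x hx)
  have hD0 : 0 < D := by
    rw [← hD, dist_pos]
    rintro rfl
    exact (hγG z₀ hw₀).not_ge (hc z₀ hz₀)
  obtain ⟨v, n, hF, hline, hz₀n⟩ :=
    hγ.exists_isLorentzFrame_of_forall_le_dist hw₀ hD0 hD (hmin z₀ hz₀)
  have hpn := hF.normal.toHyperboloid_eq_of_dist_eq_add hD0.ne' hz₀n (hD ▸ hp)
  obtain ⟨u₁, u₂, hu₁, hu₂, hcorner⟩ := hF.exists_isUnitNormal_of_orthogonal_rays hγ.nonempty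
    (hF.isUnitNormal hline) dist_nonneg hpn hf₁ hf₂ horth hb₁ hb₂
  obtain ⟨hsinh, hadd, hsub⟩ := hF.sinh_le_and_nullGap_mul_cosh_le hline hD0 hS hm.vec hmγ
    (hz₀n ▸ lorentz_comm m _ ▸ hmc z₀ hz₀) (hmin z hz) (hmc z hz)
  obtain ⟨hle₁, hle₂⟩ := hcorner _ _ (mul_pos (nullGap_pos hS) (Real.cosh_pos D)).le hadd hsub
  exact ⟨hu₁.add_log_le_dist ⟨s, hs, rfl⟩ hgap.le (by linarith),
    hu₂.add_log_le_dist ⟨s, hs, rfl⟩ hgap.le (by linarith)⟩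

/-- For every `κ ∈ (0,1)` there is `d_κ > 0` such that: if `c` is a
complete curve of constant curvature `κ` (a connected equidistant curve at distance
`artanh κ` from a geodesic `G`), `γ` a complete geodesic in the non-mean-convex side
of `c`, `D = d(c,γ)` the (realized) distance from `c` to `γ`, `p` the point beyond
`γ` on the common perpendicular, and `γ₁`, `γ₂` the two geodesic rays from `p`,
orthogonal at `p` (hyperbolic law of cosines: `cosh d(γ₁(s),γ₂(t)) = cosh s cosh t`),
each at bounded distance from `γ` (hence ending at the ideal endpoints of `γ`), then
`d(c, γ₁ ∪ γ₂) ≥ d(c,γ) + d_κ`. -/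
theorem stmt18 :
    ∀ κ : ℝ, 0 < κ → κ < 1 → ∃ dκ > 0,
    ∀ (G c γ : Set UpperHalfPlane) (f₁ f₂ : ℝ → UpperHalfPlane)
      (p z₀ w₀ : UpperHalfPlane) (D : ℝ),
      IsGeodesicLine G → IsGeodesicLine γ →
      -- c is a connected curve equidistant from G at distance artanh κ,
      -- i.e. of constant curvature κ
      (∀ z ∈ c, Metric.infDist z G = artanh κ) → IsConnected c → c.Nonempty →
      -- γ lies in the non-mean-convex side of c
      (∀ w ∈ γ, artanh κ < Metric.infDist w G) →
      -- D is the distance from c to γ, realized at z₀ ∈ c, w₀ ∈ γ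
      z₀ ∈ c → w₀ ∈ γ → dist z₀ w₀ = D →
      (∀ z ∈ c, ∀ w ∈ γ, D ≤ dist z w) →
      -- p lies beyond w₀ on the common perpendicular γ' of c and γ
      dist z₀ p = dist z₀ w₀ + dist w₀ p →
      -- γ₁, γ₂ are geodesic rays from p, orthogonal at p,
      IsRayFrom f₁ p → IsRayFrom f₂ p →
      (∀ s t : ℝ, 0 ≤ s → 0 ≤ t →
        Real.cosh (dist (f₁ s) (f₂ t)) = Real.cosh s * Real.cosh t) →
      -- each ending at an ideal endpoint of γ (bounded distance from γ)
      (∃ Cb : ℝ, ∀ s : ℝ, 0 ≤ s → Metric.infDist (f₁ s) γ ≤ Cb) →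
      (∃ Cb : ℝ, ∀ s : ℝ, 0 ≤ s → Metric.infDist (f₂ s) γ ≤ Cb) →
      -- conclusion: d(c, γ₁ ∪ γ₂) ≥ d(c, γ) + d_κ
      ∀ z ∈ c, ∀ s : ℝ, 0 ≤ s →
        D + dκ ≤ dist z (f₁ s) ∧ D + dκ ≤ dist z (f₂ s) := by
  intro κ hκ₀ hκ₁
  obtain ⟨d, hd, h⟩ := stmt18_general (artanh_pos hκ₀ hκ₁)
  exact ⟨d, hd, fun G c γ f₁ f₂ p z₀ w₀ D hG hγ hc _ _ =>
    h G c γ f₁ f₂ p z₀ w₀ D hG hγ fun z hz => (hc z hz).le⟩
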